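/- Let D be a generalized twisted drawing of K_n with n ≥ 4, with vertices labeled v_1,…,v_n so that the rays from O through v_1,…,v_n appear in counterclockwise order around O and the ray r lies counterclockwise between the ray through v_n and the ray through v_1. Suppose the edges v_iv_j and v_kv_l of D cross, where i < j < k < l. Then the crossing point of these two edges lies in the wedge of points whose ray from O lies counterclockwise between the ray through v_j and the ray through v_k. -/

import Mathlib

/-!
Cut the plane around `O` along the ray `r`.  An edge `v_a v_b` with `a < b` meets every ray from
`O` at most once and meets `r`, so its polar angle, lifted continuously along the edge starting
at `v_b`, is strictly increasing and runs from `θ b` to `θ a + 2π`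
(`exists_polar_graph`): the edge is the graph of a continuous log-radius function
over the interval `[θ b, θ a + 2π]`, and it avoids the angles strictly between `θ a` and `θ b`.

Hence a common point of `v_i v_j` and `v_k v_l` has an angle in `[θ j, θ k]`, as claimed, or in
`[θ l, θ i + 2π]`.  In the second case compare both edges with the third edge `v_j v_k`, which
meets `v_i v_j` only in `v_j` and `v_k v_l` only in `v_k`.  Being strictly above (say)
the common point, it stays above `v_i v_j` all the way back to angle `θ k` and above `v_k v_l` all
the way forward to `θ j + 2π`.  So on the wedge `[θ j, θ k]` the edge `v_i v_j` starts, at `v_j`,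
above `v_k v_l`, and ends below `v_k`, which lies on `v_k v_l`; by the intermediate value theorem
(`exists_second_meeting`) the two edges meet again, although independent edges
share at most one point.
-/

open Set

/-- Points of the plane. -/
abbrev Pt : Type := ℝ × ℝ

/-- `A` is a simple (continuous, injective) arc from `p` to `q`. -/
def IsSimpleArc (A : Set Pt) (p q : Pt) : Prop :=
  ∃ f : ℝ → Pt, ContinuousOn f (Set.Icc 0 1) ∧ Set.InjOn f (Set.Icc 0 1) ∧
    f 0 = p ∧ f 1 = q ∧ A = f '' Set.Icc 0 1

/-- A simple drawing of the complete graph `K n` in the plane:  vertices are distinct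
points, edges are simple arcs connecting their endpoints, no edge passes through a
vertex other than its endpoints, two edges sharing an endpoint meet exactly in that
endpoint, and two independent edges meet in at most one point. -/
structure SimpleDrawing (n : ℕ) where
  vtx : Fin n → Pt
  vtx_inj : Function.Injective vtx
  arc : Fin n → Fin n → Set Pt
  arc_symm : ∀ i j, arc i j = arc j i
  arc_simple : ∀ i j, i ≠ j → IsSimpleArc (arc i j) (vtx i) (vtx j)
  vtx_not_mem : ∀ i j k, i ≠ j → k ≠ i → k ≠ j → vtx k ∉ arc i j
  adj_inter : ∀ i j k, i ≠ j → i ≠ k → j ≠ k → arc i j ∩ arc i k = {vtx i}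
  indep_inter : ∀ i j k l, i ≠ j → k ≠ l → i ≠ k → i ≠ l → j ≠ k → j ≠ l →
    (arc i j ∩ arc k l).Subsingleton

namespace SimpleDrawing

variable {n : ℕ}

/-- The union of all edges of the drawing. -/
def drawingSet (D : SimpleDrawing n) : Set Pt :=
  ⋃ (i : Fin n) (j : Fin n) (_ : i ≠ j), D.arc i j

/-- The edges `v_i v_j` and `v_k v_l` cross: they meet in a point that is not a common
endpoint of the two edges. -/
def Crosses (D : SimpleDrawing n) (i j k l : Fin n) : Prop :=
  ∃ x : Pt, x ∈ D.arc i j ∧ x ∈ D.arc k l ∧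
    ¬ ((x = D.vtx i ∨ x = D.vtx j) ∧ (x = D.vtx k ∨ x = D.vtx l))

end SimpleDrawing

/-- The ray emanating from `O` in direction `d`. -/
def rayFrom (O d : Pt) : Set Pt := {x : Pt | ∃ t : ℝ, 0 ≤ t ∧ x = O + t • d}

namespace SimpleDrawing

/-- `D` is c-monotone with respect to the point `O`: `O` does not lie on the drawing and
every ray emanating from `O` meets every edge of `D` in at most one point. -/
def CMonotoneAt (D : SimpleDrawing n) (O : Pt) : Prop :=
  O ∉ D.drawingSet ∧
    ∀ d : Pt, d ≠ 0 → ∀ i j : Fin n, i ≠ j → (rayFrom O d ∩ D.arc i j).Subsingleton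

/-- `D` is c-monotone. -/
def CMonotone (D : SimpleDrawing n) : Prop := ∃ O : Pt, D.CMonotoneAt O

/-- `D` is generalized twisted with respect to `O` and the ray from `O` with direction `d`:
`D` is c-monotone with respect to `O` and the ray meets every edge of `D`. -/
def GenTwistedAt (D : SimpleDrawing n) (O d : Pt) : Prop :=
  D.CMonotoneAt O ∧ d ≠ 0 ∧ ∀ i j : Fin n, i ≠ j → (rayFrom O d ∩ D.arc i j).Nonempty

/-- `D` is generalized twisted. -/
def GenTwisted (D : SimpleDrawing n) : Prop := ∃ O d : Pt, D.GenTwistedAt O d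

/-- The vertices `v_1, …, v_n` of `D` appear counterclockwise around `O`, at angles
`θ 0 < θ 1 < … < θ (n-1)`, all lying strictly (counterclockwise) between the angle `φ`
of the ray `r` with direction `d` and `φ + 2π`;  i.e. the vertices are labeled
counterclockwise around `O` and the ray `r` lies counterclockwise between the ray through
`v_n` and the ray through `v_1`. -/
def IsCCWLabeling (D : SimpleDrawing n) (O d : Pt) (φ : ℝ) (θ : Fin n → ℝ) : Prop :=
  (∃ s : ℝ, 0 < s ∧ d = s • ((Real.cos φ, Real.sin φ) : Pt)) ∧
  StrictMono θ ∧
  (∀ i : Fin n, θ i ∈ Set.Ioo φ (φ + 2 * Real.pi)) ∧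
  (∀ i : Fin n, ∃ s : ℝ, 0 < s ∧
    D.vtx i = O + s • ((Real.cos (θ i), Real.sin (θ i)) : Pt))

/-- `C` is a cell of `D`: a connected component of the complement of the drawing. -/
def IsCell (D : SimpleDrawing n) (C : Set Pt) : Prop :=
  ∃ x : Pt, x ∉ D.drawingSet ∧ C = connectedComponentIn D.drawingSetᶜ x

/-- `C` is a vi-cell of `D`: a cell whose closure contains a vertex. -/
def IsViCell (D : SimpleDrawing n) (C : Set Pt) : Prop :=
  D.IsCell C ∧ ∃ i : Fin n, D.vtx i ∈ closure C

/-- The triangle of `D` on the three vertices `i`, `j`, `k` (as a subset of the plane). -/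
def triangleSet (D : SimpleDrawing n) (i j k : Fin n) : Set Pt :=
  D.arc i j ∪ D.arc j k ∪ D.arc i k

/-- Two cells are antipodal if for every triangle of `D` they lie in different sides
(connected components of the complement) of that triangle. -/
def Antipodal (D : SimpleDrawing n) (C₁ C₂ : Set Pt) : Prop :=
  ∀ i j k : Fin n, i ≠ j → j ≠ k → i ≠ k →
    ∀ x ∈ C₁, ∀ y ∈ C₂,
      connectedComponentIn (D.triangleSet i j k)ᶜ x ≠
        connectedComponentIn (D.triangleSet i j k)ᶜ y

/-- `D` and `E` are weakly isomorphic: some bijection of the vertices preserves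
crossing pairs of edges. -/
def WeaklyIso (D E : SimpleDrawing n) : Prop :=
  ∃ σ : Fin n ≃ Fin n, ∀ i j k l : Fin n, i ≠ j → k ≠ l →
    (D.Crosses i j k l ↔ E.Crosses (σ i) (σ j) (σ k) (σ l))

end SimpleDrawing

/-! ### Polar coordinates and arcs -/

/-- The point whose polar coordinates around `O` are the radius `exp ρ` and the angle `α`.
The logarithmic radius lets `ρ` range over all reals while the point stays away from `O`. -/
noncomputable def polarPt (O : Pt) (ρ α : ℝ) : Pt :=
  O + Real.exp ρ • ((Real.cos α, Real.sin α) : Pt)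

lemma polarPt_eq_add (O : Pt) {s : ℝ} (hs : 0 < s) (α : ℝ) :
    O + s • ((Real.cos α, Real.sin α) : Pt) = polarPt O (Real.log s) α := by
  rw [polarPt, Real.exp_log hs]

lemma polarPt_add_int (O : Pt) (ρ α : ℝ) (m : ℤ) :
    polarPt O ρ (α + m * (2 * Real.pi)) = polarPt O ρ α := by
  simp only [polarPt, Real.cos_add_int_mul_two_pi, Real.sin_add_int_mul_two_pi]

lemma polarPt_add_two_pi (O : Pt) (ρ α : ℝ) :
    polarPt O ρ (α + 2 * Real.pi) = polarPt O ρ α := by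
  simp [polarPt]

lemma polarPt_eq_exp (O : Pt) (z : ℂ) :
    polarPt O z.re z.im = O + ((Complex.exp z).re, (Complex.exp z).im) := by
  simp [polarPt, Complex.exp_re, Complex.exp_im]

lemma polarPt_inj {O : Pt} {ρ α ρ' α' : ℝ} (h : polarPt O ρ α = polarPt O ρ' α') :
    ρ = ρ' ∧ ∃ m : ℤ, α = α' + m * (2 * Real.pi) := by
  have h1 := polarPt_eq_exp O ⟨ρ, α⟩
  have h2 := polarPt_eq_exp O ⟨ρ', α'⟩
  have h3 : Complex.exp ⟨ρ, α⟩ = Complex.exp ⟨ρ', α'⟩ := by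
    have := add_left_cancel ((h1.symm.trans h).trans h2)
    exact Complex.ext (congrArg Prod.fst this) (congrArg Prod.snd this)
  obtain ⟨m, hm⟩ := Complex.exp_eq_exp_iff_exists_int.1 h3
  refine ⟨?_, m, ?_⟩
  · simpa using congrArg Complex.re hm
  · simpa using congrArg Complex.im hm

/-- A path avoiding `O` has continuous polar coordinates around `O`, with prescribed initial
angle: lift it through the covering `Complex.exp : ℂ → ℂ \ {0}`. -/
lemma exists_polar_lift {O : Pt} {f : ℝ → Pt} (hf : ContinuousOn f (Icc 0 1))
    (hO : ∀ t ∈ Icc (0 : ℝ) 1, f t ≠ O) {ρ₀ α₀ : ℝ} (h0 : f 0 = polarPt O ρ₀ α₀) :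
    ∃ g h : ℝ → ℝ, Continuous g ∧ Continuous h ∧ h 0 = α₀ ∧
      ∀ t ∈ Icc (0 : ℝ) 1, f t = polarPt O (g t) (h t) := by
  have hfI : Continuous fun t : unitInterval => f t :=
    hf.comp_continuous continuous_subtype_val fun t => t.2
  have hne : ∀ t : unitInterval,
      (⟨(f t - O).1, (f t - O).2⟩ : ℂ) ≠ 0 := by
    intro t ht
    have h1 := congrArg Complex.re ht
    have h2 := congrArg Complex.im ht
    exact hO t t.2 (sub_eq_zero.1 (Prod.ext h1 h2))
  have hc : Continuous fun t : unitInterval => (⟨(f t - O).1, (f t - O).2⟩ : ℂ) :=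
    Complex.equivRealProdCLM.symm.continuous.comp (hfI.sub continuous_const)
  let γ : C(unitInterval, {z : ℂ // z ≠ 0}) :=
    ⟨fun t => ⟨⟨(f t - O).1, (f t - O).2⟩, hne t⟩, hc.subtype_mk _⟩
  have hγ0 : γ 0 = (fun z : ℂ => (⟨_, z.exp_ne_zero⟩ : {z : ℂ // z ≠ 0})) ⟨ρ₀, α₀⟩ := by
    have h1 := polarPt_eq_exp O ⟨ρ₀, α₀⟩
    apply Subtype.ext
    have h2 : f 0 - O = ((Complex.exp ⟨ρ₀, α₀⟩).re, (Complex.exp ⟨ρ₀, α₀⟩).im) := by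
      rw [h0]
      simp only [] at h1
      rw [h1, add_sub_cancel_left]
    apply Complex.ext
    · exact congrArg Prod.fst h2
    · exact congrArg Prod.snd h2
  obtain ⟨Γ, hΓ, hΓ0⟩ := Complex.isCoveringMap_exp.exists_path_lifts γ _ hγ0
  refine ⟨fun t => (Γ (projIcc 0 1 zero_le_one t)).re,
    fun t => (Γ (projIcc 0 1 zero_le_one t)).im, by fun_prop, by fun_prop, ?_, ?_⟩
  · simp [hΓ0]
  · intro t ht
    dsimp only
    rw [projIcc_of_mem zero_le_one ht, polarPt_eq_exp]
    have h1 := congrArg Subtype.val (congrFun hΓ ⟨t, ht⟩)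
    simp only [Function.comp] at h1
    rw [h1]
    ext <;> simp [γ]

/-- An arc from angle `b` to angle `a`, with `φ < a < b < φ + 2π`, that meets every ray from `O`
at most once and meets the ray at angle `φ`, is the graph over `[b, a + 2π]` of a continuous
log-radius function. -/
lemma exists_polar_graph {A : Set Pt} {O p q : Pt} {a b φ ρa ρb : ℝ}
    (hA : IsSimpleArc A q p) (hO : O ∉ A)
    (hray : ∀ ρ ρ' α, polarPt O ρ α ∈ A → polarPt O ρ' α ∈ A → ρ = ρ')
    (hmeet : ∃ ρ, polarPt O ρ φ ∈ A)
    (hp : p = polarPt O ρa a) (hq : q = polarPt O ρb b)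
    (ha : φ < a) (hab : a < b) (hb : b < φ + 2 * Real.pi) :
    ∃ u : ℝ → ℝ, ContinuousOn u (Icc b (a + 2 * Real.pi)) ∧
      ∀ x, x ∈ A ↔ ∃ α ∈ Icc b (a + 2 * Real.pi), x = polarPt O (u α) α := by
  obtain ⟨f, hf, hinj, hf0, hf1, rfl⟩ := hA
  obtain ⟨g, h, hg, hh, hh0, hgh⟩ := exists_polar_lift (O := O) hf
    (fun t ht hc => hO ⟨t, ht, hc⟩) (hf0.trans hq)
  have hpi := Real.pi_pos
  have h01 : (0 : ℝ) ∈ Icc (0 : ℝ) 1 := ⟨le_rfl, zero_le_one⟩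
  have h11 : (1 : ℝ) ∈ Icc (0 : ℝ) 1 := ⟨zero_le_one, le_rfl⟩
  -- c-monotonicity: the angle is injective even modulo `2π`
  have hmod : ∀ s ∈ Icc (0 : ℝ) 1, ∀ t ∈ Icc (0 : ℝ) 1, ∀ m : ℤ,
      h s = h t + m * (2 * Real.pi) → s = t := by
    intro s hs t ht m hm
    have e1 : f s = polarPt O (g s) (h t) := by
      rw [hgh s hs, hm, polarPt_add_int]
    have e2 := hgh t ht
    have e3 : g s = g t := hray _ _ (h t) (e1 ▸ ⟨s, hs, rfl⟩) (e2 ▸ ⟨t, ht, rfl⟩)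
    exact hinj hs ht (by rw [e1, e2, e3])
  have hhinj : InjOn h (Icc 0 1) := fun s hs t ht e => hmod s hs t ht 0 (by simp [e])
  obtain ⟨m, hm⟩ : ∃ m : ℤ, h 1 = a + m * (2 * Real.pi) :=
    (polarPt_inj (((hgh 1 h11).symm.trans hf1).trans hp)).2
  obtain ⟨ρ, t₀, ht₀, hρ⟩ := hmeet
  obtain ⟨m', hm'⟩ : ∃ m' : ℤ, h t₀ = φ + m' * (2 * Real.pi) :=
    (polarPt_inj ((hgh t₀ ht₀).symm.trans hρ)).2
  -- the total angle swept is less than a full turn in either direction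
  have hup : h 1 < b + 2 * Real.pi := by
    by_contra! hc
    obtain ⟨t, ht, e⟩ := intermediate_value_Icc zero_le_one hh.continuousOn
      (show b + 2 * Real.pi ∈ Icc (h 0) (h 1) from ⟨by linarith, hc⟩)
    have := hmod t ht 0 h01 1 (by rw [e, hh0]; simp)
    rw [this, hh0] at e; linarith
  have hdown : b - 2 * Real.pi < h 1 := by
    by_contra! hc
    obtain ⟨t, ht, e⟩ := intermediate_value_Icc' zero_le_one hh.continuousOn
      (show b - 2 * Real.pi ∈ Icc (h 1) (h 0) from ⟨hc, by linarith⟩)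
    have := hmod t ht 0 h01 (-1) (by rw [e, hh0]; push_cast; ring)
    rw [this, hh0] at e; linarith
  have int_lt : ∀ {c d : ℤ}, (c : ℝ) * (2 * Real.pi) < d * (2 * Real.pi) → c < d := by
    intro c d hcd
    exact_mod_cast lt_of_mul_lt_mul_right hcd (by positivity)
  have hm0 : 0 ≤ m := by
    have : (-1 : ℤ) < m := int_lt (by push_cast; linarith)
    omega
  have hm2 : m < 2 := int_lt (by push_cast; linarith)
  rcases ContinuousOn.strictMonoOn_of_injOn_Icc' zero_le_one hh.continuousOn hhinj with hmono | hanti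
  swap
  · -- going down from `b` the arc would stop at `a` without meeting the angle `φ`
    exfalso
    have hl : h 1 < h 0 := hanti h01 h11 zero_lt_one
    have hm1 : m = 0 := by
      have : m < 1 := int_lt (by push_cast; linarith)
      omega
    have l1 : h t₀ ≤ h 0 := hanti.antitoneOn h01 ht₀ ht₀.1
    have l2 : h 1 ≤ h t₀ := hanti.antitoneOn ht₀ h11 ht₀.2
    subst hm1
    have c1 : (0 : ℤ) < m' := int_lt (by push_cast at hm ⊢; linarith)
    have c2 : m' < 1 := int_lt (by push_cast; linarith)
    omega
  have hl : h 0 < h 1 := hmono h01 h11 zero_lt_one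
  have hm1 : m = 1 := by
    have : (0 : ℤ) < m := int_lt (by push_cast; linarith)
    omega
  subst hm1
  have h1 : h 1 = a + 2 * Real.pi := by simpa using hm
  have himg : h '' Icc 0 1 = Icc b (a + 2 * Real.pi) := by
    rw [← hh0, ← h1]
    refine Subset.antisymm ?_ (intermediate_value_Icc zero_le_one hh.continuousOn)
    rintro _ ⟨t, ht, rfl⟩
    exact ⟨hmono.monotoneOn h01 ht ht.1, hmono.monotoneOn ht h11 ht.2⟩
  -- the inverse of the angle function is continuous, being an order isomorphism
  set e := hmono.orderIso with he
  have hoc : OrdConnected (h '' Icc 0 1) := himg ▸ ordConnected_Icc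
  have hec : Continuous e.symm := e.symm.continuous
  classical
  set k : ℝ → ℝ := fun α => if hα : α ∈ h '' Icc 0 1 then (e.symm ⟨α, hα⟩ : ℝ) else 0 with hk
  have hkc : ContinuousOn k (h '' Icc 0 1) := by
    rw [continuousOn_iff_continuous_domRestrict]
    have : (h '' Icc 0 1).domRestrict k = fun α => ((e.symm α : Icc (0 : ℝ) 1) : ℝ) := by
      funext α
      exact dif_pos α.2
    rw [this]
    fun_prop
  have hkh : ∀ t ∈ Icc (0 : ℝ) 1, k (h t) = t := by
    intro t ht
    have hα : h t ∈ h '' Icc 0 1 := ⟨t, ht, rfl⟩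
    have : e ⟨t, ht⟩ = ⟨h t, hα⟩ := rfl
    simp only [hk, dif_pos hα, ← this, OrderIso.symm_apply_apply]
  refine ⟨fun α => g (k α), hg.comp_continuousOn (himg ▸ hkc), fun x => ⟨?_, ?_⟩⟩
  · rintro ⟨t, ht, rfl⟩
    refine ⟨h t, himg ▸ ⟨t, ht, rfl⟩, ?_⟩
    simp only [hkh t ht, hgh t ht]
  · rintro ⟨α, hα, rfl⟩
    rw [← himg] at hα
    obtain ⟨t, ht, rfl⟩ := hα
    exact ⟨t, ht, by simp only [hkh t ht, hgh t ht]⟩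

/-! ### Comparing the three edges -/

lemma lt_of_lt_of_ne {c d : ℝ} {u v : ℝ → ℝ} (hu : ContinuousOn u (Icc c d))
    (hv : ContinuousOn v (Icc c d)) (hne : ∀ x ∈ Icc c d, u x ≠ v x) {x y : ℝ}
    (hx : x ∈ Icc c d) (hy : y ∈ Icc c d) (h : u x < v x) : u y < v y := by
  by_contra! hc
  obtain ⟨z, hz, e⟩ := isPreconnected_Icc.intermediate_value₂ hx hy hu hv h.le hc
  exact hne z hz e

/-- The functions `u`, `v`, `w` are the log-radii of the edges `v₁v₂`, `v₃v₄`, `v₂v₃`, and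
`T` is a full turn.  If the first two edges meet in the wedge from `v₄` to `v₁`
below the third edge, then they also meet in the wedge from `v₂` to `v₃`. -/
lemma exists_second_meeting {t₁ t₂ t₃ t₄ T α : ℝ} {u v w : ℝ → ℝ}
    (h12 : t₁ < t₂) (h23 : t₂ < t₃) (h34 : t₃ < t₄)
    (hu : ContinuousOn u (Icc t₂ (t₁ + T))) (hv : ContinuousOn v (Icc t₄ (t₃ + T)))
    (hw : ContinuousOn w (Icc t₃ (t₂ + T)))
    (hα : α ∈ Icc t₄ (t₁ + T)) (huv : u α = v α) (huw : u α < w α)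
    (hne1 : ∀ x ∈ Icc t₃ (t₁ + T), u x ≠ w x) (hne2 : ∀ x ∈ Icc t₄ (t₂ + T), v x ≠ w x)
    (h2 : u t₂ = w (t₂ + T)) (h3 : v (t₃ + T) = w t₃) :
    ∃ γ ∈ Icc t₂ t₃, u γ = v (γ + T) := by
  obtain ⟨hα1, hα2⟩ := hα
  have a1 : u t₃ < w t₃ := lt_of_lt_of_ne
    (hu.mono (Icc_subset_Icc h23.le le_rfl)) (hw.mono (Icc_subset_Icc le_rfl (by linarith)))
    hne1 (x := α) ⟨by linarith, by linarith⟩ ⟨le_rfl, by linarith⟩ huw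
  have a2 : v (t₂ + T) < w (t₂ + T) := lt_of_lt_of_ne
    (hv.mono (Icc_subset_Icc le_rfl (by linarith))) (hw.mono (Icc_subset_Icc h34.le le_rfl))
    hne2 (x := α) ⟨by linarith, by linarith⟩ ⟨by linarith, le_rfl⟩ (huv ▸ huw)
  have hu' : ContinuousOn u (Icc t₂ t₃) := hu.mono (Icc_subset_Icc le_rfl (by linarith))
  have hv' : ContinuousOn (fun γ => v (γ + T)) (Icc t₂ t₃) := by
    refine hv.comp (by fun_prop) fun γ hγ => ⟨?_, ?_⟩ <;> linarith [hγ.1, hγ.2]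
  exact isPreconnected_Icc.intermediate_value₂ (right_mem_Icc.2 h23.le) (left_mem_Icc.2 h23.le)
    hu' hv' (by linarith) (by linarith)

namespace SimpleDrawing

/-- The edge `v_a v_b`, `a < b`, of a generalized twisted drawing is a polar graph over
`[θ b, θ a + 2π]`, and the endpoints of the graph are `v_b` and `v_a`. -/
lemma exists_edge_graph {n : ℕ} {D : SimpleDrawing n} {O d : Pt} {φ : ℝ} {θ : Fin n → ℝ}
    (hGT : D.GenTwistedAt O d) (hLab : D.IsCCWLabeling O d φ θ) {a b : Fin n} (hab : a < b) :
    ∃ u : ℝ → ℝ, ContinuousOn u (Icc (θ b) (θ a + 2 * Real.pi)) ∧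
      (∀ x, x ∈ D.arc a b ↔ ∃ α ∈ Icc (θ b) (θ a + 2 * Real.pi), x = polarPt O (u α) α) ∧
      D.vtx b = polarPt O (u (θ b)) (θ b) ∧
      D.vtx a = polarPt O (u (θ a + 2 * Real.pi)) (θ a) := by
  obtain ⟨⟨hO, hmon⟩, -, hmeet⟩ := hGT
  obtain ⟨⟨s, hs, rfl⟩, hθ, hθm, hvtx⟩ := hLab
  have hOA : O ∉ D.arc a b := by
    intro h
    exact hO (mem_iUnion.2 ⟨a, mem_iUnion.2 ⟨b, mem_iUnion.2 ⟨hab.ne, h⟩⟩⟩)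
  have hmem : ∀ ρ α, polarPt O ρ α ∈ rayFrom O ((Real.cos α, Real.sin α) : Pt) :=
    fun ρ α => ⟨Real.exp ρ, (Real.exp_pos ρ).le, rfl⟩
  have hray : ∀ ρ ρ' α, polarPt O ρ α ∈ D.arc a b → polarPt O ρ' α ∈ D.arc a b → ρ = ρ' := by
    intro ρ ρ' α h h'
    refine (polarPt_inj (hmon ((Real.cos α, Real.sin α) : Pt) ?_ a b hab.ne
      ⟨hmem ρ α, h⟩ ⟨hmem ρ' α, h'⟩)).1
    intro h0
    have c := congrArg Prod.fst h0
    have c' := congrArg Prod.snd h0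
    have := Real.sin_sq_add_cos_sq α
    simp only [Prod.fst_zero, Prod.snd_zero] at c c'
    rw [c, c'] at this
    norm_num at this
  have hm : ∃ ρ, polarPt O ρ φ ∈ D.arc a b := by
    obtain ⟨x, ⟨t, ht, rfl⟩, hx⟩ := hmeet a b hab.ne
    rcases ht.eq_or_lt with rfl | ht
    · simp only [zero_smul, add_zero] at hx
      exact absurd hx hOA
    · rw [smul_smul, polarPt_eq_add O (mul_pos ht hs)] at hx
      exact ⟨_, hx⟩
  obtain ⟨sa, hsa, ha⟩ := hvtx a
  obtain ⟨sb, hsb, hb⟩ := hvtx b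
  rw [polarPt_eq_add O hsa] at ha
  rw [polarPt_eq_add O hsb] at hb
  have hA : IsSimpleArc (D.arc a b) (D.vtx b) (D.vtx a) :=
    D.arc_symm a b ▸ D.arc_simple b a hab.ne'
  have hva : D.vtx a ∈ D.arc a b := by
    obtain ⟨f, -, -, -, h1, h⟩ := hA
    exact h ▸ ⟨1, by simp, h1⟩
  have hvb : D.vtx b ∈ D.arc a b := by
    obtain ⟨f, -, -, h0, -, h⟩ := hA
    exact h ▸ ⟨0, by simp, h0⟩
  obtain ⟨u, hu, hux⟩ := exists_polar_graph hA hOA hray hm ha hb (hθm a).1 (hθ hab) (hθm b).2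
  have hle : θ b ≤ θ a + 2 * Real.pi := by linarith [(hθm a).1, (hθm b).2]
  refine ⟨u, hu, hux, ?_, ?_⟩
  · have h1 : polarPt O (u (θ b)) (θ b) ∈ D.arc a b := (hux _).2 ⟨_, left_mem_Icc.2 hle, rfl⟩
    rw [hray _ _ _ h1 (hb ▸ hvb)]
    exact hb
  · have h1 : polarPt O (u (θ a + 2 * Real.pi)) (θ a) ∈ D.arc a b :=
      (hux _).2 ⟨_, right_mem_Icc.2 hle, (polarPt_add_two_pi ..).symm⟩
    rw [hray _ _ _ h1 (ha ▸ hva)]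
    exact ha

end SimpleDrawing

/-- In a generalized twisted drawing of `K n` (`n ≥ 4`) labeled
counterclockwise around `O`, if the edges `v_i v_j` and `v_k v_l` cross with
`i < j < k < l`, then their crossing point lies in the wedge of points whose ray from
`O` lies counterclockwise between the ray through `v_j` and the ray through `v_k`. -/
theorem stmt_13 (n : ℕ) (hn : 4 ≤ n) (D : SimpleDrawing n) (O d : Pt)
    (φ : ℝ) (θ : Fin n → ℝ)
    (hGT : D.GenTwistedAt O d) (hLab : D.IsCCWLabeling O d φ θ)
    (i j k l : Fin n) (hij : i < j) (hjk : j < k) (hkl : k < l)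
    (hcross : D.Crosses i j k l) :
    ∀ x : Pt, x ∈ D.arc i j → x ∈ D.arc k l →
      ∃ ρ α : ℝ, 0 < ρ ∧ θ j ≤ α ∧ α ≤ θ k ∧
        x = O + ρ • ((Real.cos α, Real.sin α) : Pt) := by
  intro x hx hx'
  have hpi := Real.pi_pos
  obtain ⟨u, hu, hux, hu2, hu1⟩ := D.exists_edge_graph hGT hLab hij
  obtain ⟨v, hv, hvx, hv4, hv3⟩ := D.exists_edge_graph hGT hLab hkl
  obtain ⟨w, hw, hwx, hw3, hw2⟩ := D.exists_edge_graph hGT hLab hjk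
  obtain ⟨-, hθ, hθm, -⟩ := hLab
  have t12 := hθ hij
  have t23 := hθ hjk
  have t34 := hθ hkl
  have b1 := (hθm i).1
  have b4 := (hθm l).2
  obtain ⟨α, hα, rfl⟩ := (hux x).1 hx
  obtain ⟨β, hβ, hαβ⟩ := (hvx _).1 hx'
  obtain ⟨huv, m, hm⟩ := polarPt_inj hαβ
  have hm1 : m ≤ 0 := by
    by_contra! hc
    have : (1 : ℝ) ≤ m := by exact_mod_cast hc
    nlinarith [hα.1, hα.2, hβ.1, hβ.2]
  have hm2 : -1 ≤ m := by
    by_contra! hc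
    have : (m : ℝ) ≤ -2 := by exact_mod_cast (by omega : m ≤ -2)
    nlinarith [hα.1, hα.2, hβ.1, hβ.2]
  obtain rfl | rfl : m = -1 ∨ m = 0 := by omega
  · refine ⟨Real.exp (u α), α, Real.exp_pos _, hα.1, ?_, rfl⟩
    push_cast at hm
    linarith [hβ.2]
  exfalso
  obtain rfl : α = β := by simpa using hm
  have hαI : α ∈ Icc (θ l) (θ i + 2 * Real.pi) := ⟨hβ.1, hα.2⟩
  -- `v_j v_k` meets `v_i v_j` only in `v_j`, and `v_k v_l` only in `v_k`
  have hne1 : ∀ y ∈ Icc (θ k) (θ i + 2 * Real.pi), u y ≠ w y := by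
    intro y hy e
    have m1 : polarPt O (u y) y ∈ D.arc j i :=
      D.arc_symm i j ▸ (hux _).2 ⟨y, ⟨by linarith [hy.1], hy.2⟩, rfl⟩
    have m2 : polarPt O (u y) y ∈ D.arc j k :=
      (hwx _).2 ⟨y, ⟨hy.1, by linarith [hy.2]⟩, by rw [e]⟩
    have h := (D.adj_inter j i k hij.ne' hjk.ne (hij.trans hjk).ne).subset ⟨m1, m2⟩
    rw [mem_singleton_iff, hu2] at h
    obtain ⟨-, m, hm⟩ := polarPt_inj h
    have c1 : (0 : ℝ) < m := by
      by_contra! hc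
      nlinarith [hy.1, hy.2]
    have c2 : (m : ℝ) < 1 := by
      by_contra! hc
      nlinarith [hy.1, hy.2]
    have c1' : 0 < m := by exact_mod_cast c1
    have c2' : m < 1 := by exact_mod_cast c2
    omega
  have hne2 : ∀ y ∈ Icc (θ l) (θ j + 2 * Real.pi), v y ≠ w y := by
    intro y hy e
    have m1 : polarPt O (v y) y ∈ D.arc k l :=
      (hvx _).2 ⟨y, ⟨hy.1, by linarith [hy.2]⟩, rfl⟩
    have m2 : polarPt O (v y) y ∈ D.arc k j :=
      D.arc_symm j k ▸ (hwx _).2 ⟨y, ⟨by linarith [hy.1], hy.2⟩, by rw [e]⟩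
    have h := (D.adj_inter k l j hkl.ne hjk.ne' (hjk.trans hkl).ne').subset ⟨m1, m2⟩
    rw [mem_singleton_iff, hw3] at h
    obtain ⟨-, m, hm⟩ := polarPt_inj h
    have c1 : (0 : ℝ) < m := by
      by_contra! hc
      nlinarith [hy.1, hy.2]
    have c2 : (m : ℝ) < 1 := by
      by_contra! hc
      nlinarith [hy.1, hy.2]
    have c1' : 0 < m := by exact_mod_cast c1
    have c2' : m < 1 := by exact_mod_cast c2
    omega
  have h2 : u (θ j) = w (θ j + 2 * Real.pi) := (polarPt_inj (hu2.symm.trans hw2)).1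
  have h3 : v (θ k + 2 * Real.pi) = w (θ k) := (polarPt_inj (hv3.symm.trans hw3)).1
  obtain ⟨γ, hγ, e⟩ : ∃ γ ∈ Icc (θ j) (θ k), u γ = v (γ + 2 * Real.pi) := by
    rcases lt_or_gt_of_ne (hne1 α ⟨by linarith [hαI.1], hαI.2⟩) with hlt | hgt
    · exact exists_second_meeting t12 t23 t34 hu hv hw hαI huv hlt hne1 hne2 h2 h3
    · -- negating the log-radii is the inversion in a circle around `O`
      obtain ⟨γ, hγ, e⟩ := exists_second_meeting t12 t23 t34 hu.neg hv.neg hw.neg hαI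
        (congrArg Neg.neg huv) (neg_lt_neg hgt) (fun y hy e => hne1 y hy (neg_injective e))
        (fun y hy e => hne2 y hy (neg_injective e)) (congrArg Neg.neg h2) (congrArg Neg.neg h3)
      exact ⟨γ, hγ, neg_injective e⟩
  have m1 : polarPt O (u γ) γ ∈ D.arc i j :=
    (hux _).2 ⟨γ, ⟨hγ.1, by linarith [hγ.2, hαI.1, hαI.2]⟩, rfl⟩
  have m2 : polarPt O (u γ) γ ∈ D.arc k l :=
    (hvx _).2 ⟨γ + 2 * Real.pi, ⟨by linarith [hγ.1], by linarith [hγ.2]⟩,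
      by rw [e, polarPt_add_two_pi]⟩
  have hsub := D.indep_inter i j k l hij.ne hkl.ne (hij.trans hjk).ne
    (hij.trans (hjk.trans hkl)).ne hjk.ne (hjk.trans hkl).ne ⟨hx, hx'⟩ ⟨m1, m2⟩
  -- the two common points lie in disjoint wedges
  obtain ⟨-, m, hm⟩ := polarPt_inj hsub
  have c1 : (0 : ℝ) < m := by
    by_contra! hc
    nlinarith [hγ.1, hγ.2, hαI.1, hαI.2]
  have c2 : (m : ℝ) < 1 := by
    by_contra! hc
    nlinarith [hγ.1, hγ.2, hαI.1, hαI.2]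
  have c1' : 0 < m := by exact_mod_cast c1
  have c2' : m < 1 := by exact_mod_cast c2
  omega
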